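/- arXiv:2308.07030 — 2 statements merged into one kernel-verified Lean document; each statement's English description precedes it below -/
import Mathlib

section
/- For every even natural number N ≥ 2, the angle θ*_N lies in the set 𝒢, where θ*_N = 2π·t_N/(N+1) with t_N = N/4 + 1/2 if N ≡ 2 (mod 8), t_N = N/4 if N ≡ 4 (mod 8), t_N = 3N/4 + 1/2 if N ≡ 6 (mod 8), and t_N = 3N/4 + 1 if N ≡ 0 (mod 8). -/
open Real

/-- The set `𝒢 = (π/4, π/2) ∪ (π/2, 3π/4) ∪ (5π/4, 3π/2) ∪ (3π/2, 7π/4)`. -/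
noncomputable def Gset : Set ℝ :=
  Set.Ioo (π / 4) (π / 2) ∪ Set.Ioo (π / 2) (3 * π / 4)
    ∪ Set.Ioo (5 * π / 4) (3 * π / 2) ∪ Set.Ioo (3 * π / 2) (7 * π / 4)

/-- The value `t_N` defined, for even `N`, according to `N mod 8`. -/
noncomputable def tval (N : ℕ) : ℝ :=
  if N % 8 = 2 then (N : ℝ) / 4 + 1 / 2
  else if N % 8 = 4 then (N : ℝ) / 4
  else if N % 8 = 6 then 3 * (N : ℝ) / 4 + 1 / 2
  else 3 * (N : ℝ) / 4 + 1

/-- The angle `θ*_N = 2π t_N/(N+1)`. -/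
noncomputable def thetaStar (N : ℕ) : ℝ := 2 * π * tval N / ((N : ℝ) + 1)

/-- Proposition 3: for every even `N ≥ 2`, the angle `θ*_N` lies in `𝒢`. -/
theorem thetaStar_mem_Gset (N : ℕ) (hN : 2 ≤ N) (hNeven : N % 2 = 0) :
    thetaStar N ∈ Gset := by
  have h2 : (2 : ℝ) ≤ N := by exact_mod_cast hN
  have hp := Real.pi_pos
  have hn : (0 : ℝ) < (N : ℝ) + 1 := by linarith
  have hm : 0 < π * ((N : ℝ) - 1) := mul_pos hp (by linarith)
  have h8 : N % 8 = 2 ∨ N % 8 = 4 ∨ N % 8 = 6 ∨ N % 8 = 0 := by omega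
  unfold thetaStar Gset tval
  rcases h8 with h | h | h | h
  · refine Or.inl (Or.inl (Or.inr ⟨?_, ?_⟩)) <;> simp only [h] <;> norm_num
    · rw [lt_div_iff₀ hn]; nlinarith
    · rw [div_lt_iff₀ hn]; nlinarith
  · refine Or.inl (Or.inl (Or.inl ⟨?_, ?_⟩)) <;> simp only [h] <;> norm_num
    · rw [lt_div_iff₀ hn]; nlinarith
    · rw [div_lt_iff₀ hn]; nlinarith
  · refine Or.inl (Or.inr ⟨?_, ?_⟩) <;> simp only [h] <;> norm_num
    · rw [lt_div_iff₀ hn]; nlinarith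
    · rw [div_lt_iff₀ hn]; nlinarith
  · refine Or.inr ⟨?_, ?_⟩ <;> simp only [h] <;> norm_num
    · rw [lt_div_iff₀ hn]; nlinarith
    · rw [div_lt_iff₀ hn]; nlinarith
end

section
/- Let N ≥ 3 be an odd natural number and let s be a real number with 1 < s < 2^{(N−1)/2}. If N ≡ 3 (mod 4), then there exists θ ∈ 𝒢 such that M_N(θ) = s. If N ≡ 1 (mod 4), then there exists θ ∈ 𝒢 such that M̃_N(θ) = s. (For odd N, every MABK value strictly between the local bound 1 and the maximum quantum value 2^{(N−1)/2} is achieved by a self-testable strategy from the one-parameter GHZ family, using the relabelled MABK expression when N ≡ 1 mod 4.) -/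
open Real

/-- The MABK value `M_N(θ)` of the one-parameter symmetric GHZ strategy. -/
noncomputable def MABK (N : ℕ) (θ : ℝ) : ℝ :=
  (2 : ℝ) ^ (((N : ℝ) - 1) / 2) *
    (cos (θ / 2 + π / 4) ^ N * sin ((N : ℝ) * θ / 2 + π / 4)
      + cos (θ / 2 - π / 4) ^ N * sin ((N : ℝ) * θ / 2 - π / 4))

/-- The relabelled MABK value `M̃_N(θ)` of the same strategy family, after relabelling
of every party's inputs followed by the output of every party's first measurement. -/
noncomputable def MABKtilde (N : ℕ) (θ : ℝ) : ℝ :=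
  (2 : ℝ) ^ (((N : ℝ) - 1) / 2) *
    (cos (θ / 2 + π / 4) ^ N * sin (-((N : ℝ) * θ / 2) + π / 4)
      - cos (θ / 2 - π / 4) ^ N * sin ((N : ℝ) * θ / 2 + π / 4))

/-- Existence along the rescaled family. -/
lemma exists_aux (m : ℕ) (hm : 1 ≤ m) (e : ℝ) (he : e = 1 ∨ (e = -1 ∧ 2 ≤ m))
    (s : ℝ) (hs1 : 1 < s) (hs2 : s < (2 : ℝ) ^ m) :
    ∃ x : ℝ, 0 < x ∧ x < π / 8 ∧
      (2 : ℝ) ^ m * (cos x ^ (2 * m + 1) * cos (((2 * m + 1 : ℕ) : ℝ) * x)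
        + e * (sin x ^ (2 * m + 1) * sin (((2 * m + 1 : ℕ) : ℝ) * x))) = s := by
  have hpi := Real.pi_pos
  set F : ℝ → ℝ := fun x => (2 : ℝ) ^ m * (cos x ^ (2 * m + 1) * cos (((2 * m + 1 : ℕ) : ℝ) * x)
        + e * (sin x ^ (2 * m + 1) * sin (((2 * m + 1 : ℕ) : ℝ) * x))) with hF
  have hcont : Continuous F := by rw [hF]; fun_prop
  have h0 : F 0 = (2 : ℝ) ^ m := by simp [hF]
  have hend : ∃ y : ℝ, 0 < y ∧ y ≤ π / 8 ∧ F y ≤ 1 := by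
    rcases Nat.lt_or_ge m 2 with h | h
    · have hm1 : m = 1 := by omega
      have he1 : e = 1 := by
        rcases he with h1 | h1
        · exact h1
        · omega
      subst hm1 he1
      refine ⟨π / 8, by positivity, le_rfl, ?_⟩
      have e1 : cos (3 * (π / 8)) = sin (π / 8) := by
        rw [← Real.cos_pi_div_two_sub]; congr 1; ring
      have e2 : sin (3 * (π / 8)) = cos (π / 8) := by
        rw [← Real.sin_pi_div_two_sub]; congr 1; ring
      simp only [hF]
      norm_num [-Real.cos_pi_div_eight, -Real.sin_pi_div_eight]
      rw [e1, e2]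
      have hsq := Real.sin_sq_add_cos_sq (π / 8)
      have : 2 * (cos (π / 8) ^ 3 * sin (π / 8) + sin (π / 8) ^ 3 * cos (π / 8))
          = 2 * sin (π / 8) * cos (π / 8) * (sin (π / 8) ^ 2 + cos (π / 8) ^ 2) := by ring
      rw [this, hsq]
      nlinarith [sq_nonneg (sin (π / 8) - cos (π / 8))]
    · have hmR : (2 : ℝ) ≤ m := by exact_mod_cast h
      have hpos : (0 : ℝ) < 2 * (m : ℝ) + 1 := by positivity
      have hy8 : π / (2 * (2 * (m : ℝ) + 1)) ≤ π / 8 :=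
        div_le_div_of_nonneg_left hpi.le (by norm_num) (by linarith)
      have hy0 : 0 < π / (2 * (2 * (m : ℝ) + 1)) := by positivity
      refine ⟨π / (2 * (2 * (m : ℝ) + 1)), hy0, hy8, ?_⟩
      have harg : ((2 * m + 1 : ℕ) : ℝ) * (π / (2 * (2 * (m : ℝ) + 1))) = π / 2 := by
        push_cast; field_simp
      simp only [hF]
      rw [harg]
      generalize π / (2 * (2 * (m : ℝ) + 1)) = y at *
      rw [Real.cos_pi_div_two, Real.sin_pi_div_two]
      have hsin0 : 0 ≤ sin y := Real.sin_nonneg_of_nonneg_of_le_pi hy0.le (by linarith)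
      have hc : 0 ≤ cos (2 * y) := Real.cos_nonneg_of_mem_Icc ⟨by linarith, by linarith⟩
      have h2 : 2 * sin y ^ 2 ≤ 1 := by
        have := Real.cos_two_mul y
        have := Real.sin_sq_add_cos_sq y
        linarith
      have hb : (2 : ℝ) ^ m * sin y ^ (2 * m + 1) = (2 * sin y ^ 2) ^ m * sin y := by
        rw [mul_pow, ← pow_mul, pow_succ]; ring
      have hb1 : (2 : ℝ) ^ m * sin y ^ (2 * m + 1) ≤ 1 := by
        rw [hb]
        exact mul_le_one₀ (pow_le_one₀ (by positivity) h2) hsin0 (Real.sin_le_one y)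
      have hb0 : 0 ≤ (2 : ℝ) ^ m * sin y ^ (2 * m + 1) := by positivity
      rcases he with h1 | ⟨h1, -⟩ <;> subst h1 <;> linarith
  obtain ⟨y, hy0, hy8, hFy⟩ := hend
  obtain ⟨x, hx, hxs⟩ := intermediate_value_Ioo' hy0.le hcont.continuousOn
    (show s ∈ Set.Ioo (F y) (F 0) from ⟨by linarith, by linarith⟩)
  exact ⟨x, hx.1, lt_of_lt_of_le hx.2 hy8, hxs⟩

/-- Proposition 5: for odd `N ≥ 3`, every MABK value strictly between the local bound `1`
and the maximum quantum value `2^{(N−1)/2}` is achieved at some `θ ∈ 𝒢`, using `M_N` when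
`N ≡ 3 (mod 4)` and the relabelled expression `M̃_N` when `N ≡ 1 (mod 4)`. -/
theorem mabk_range_odd (N : ℕ) (hN : 3 ≤ N) (hNodd : N % 2 = 1)
    (s : ℝ) (hs1 : 1 < s) (hs2 : s < (2 : ℝ) ^ (((N : ℝ) - 1) / 2)) :
    (N % 4 = 3 → ∃ θ ∈ Gset, MABK N θ = s)
    ∧ (N % 4 = 1 → ∃ θ ∈ Gset, MABKtilde N θ = s) := by
  have hpi := Real.pi_pos
  obtain ⟨m, rfl⟩ : ∃ m, N = 2 * m + 1 := ⟨N / 2, by omega⟩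
  have hpow : (2 : ℝ) ^ ((((2 * m + 1 : ℕ) : ℝ) - 1) / 2) = (2 : ℝ) ^ m := by
    rw [← Real.rpow_natCast]; congr 1; push_cast; ring
  have hodd : Odd (2 * m + 1) := ⟨m, rfl⟩
  rw [hpow] at hs2
  have c1 : ∀ x : ℝ, cos ((π / 2 + 2 * x) / 2 + π / 4) = - sin x := fun x => by
    rw [← Real.cos_add_pi_div_two]; congr 1; ring
  have c2 : ∀ x : ℝ, cos ((π / 2 + 2 * x) / 2 - π / 4) = cos x := fun x => by
    congr 1; ring
  have c3 : ∀ x : ℝ, cos ((3 * π / 2 + 2 * x) / 2 + π / 4) = - cos x := fun x => by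
    rw [← Real.cos_add_pi]; congr 1; ring
  have c4 : ∀ x : ℝ, cos ((3 * π / 2 + 2 * x) / 2 - π / 4) = - sin x := fun x => by
    rw [← Real.cos_add_pi_div_two]; congr 1; ring
  have m1 : ∀ x : ℝ, 0 < x → x < π / 8 → π / 2 + 2 * x ∈ Gset := fun x h0 h1 =>
    Or.inl (Or.inl (Or.inr ⟨by linarith, by linarith⟩))
  have m2 : ∀ x : ℝ, 0 < x → x < π / 8 → 3 * π / 2 + 2 * x ∈ Gset := fun x h0 h1 =>
    Or.inr ⟨by linarith, by linarith⟩
  have p0 : ∀ (y : ℝ) (j : ℕ), sin (y + π + j * (2 * π)) = - sin y := fun y j => by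
    rw [Real.sin_add_nat_mul_two_pi, Real.sin_add_pi]
  have p1 : ∀ (y : ℝ) (j : ℕ), sin (y + π / 2 + j * (2 * π)) = cos y := fun y j => by
    rw [Real.sin_add_nat_mul_two_pi, Real.sin_add_pi_div_two]
  have p3 : ∀ (y : ℝ) (j : ℕ), sin (y + π / 2 + π + j * (2 * π)) = - cos y := fun y j => by
    rw [Real.sin_add_nat_mul_two_pi, Real.sin_add_pi, Real.sin_add_pi_div_two]
  constructor
  · intro h4
    obtain ⟨x, hx0, hx8, hx⟩ := exists_aux m (by omega) 1 (Or.inl rfl) s hs1 hs2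
    rcases (by omega : (2 * m + 1) % 8 = 3 ∨ (2 * m + 1) % 8 = 7) with h8 | h8
    · obtain ⟨k, hk⟩ : ∃ k, m = 4 * k + 1 := ⟨m / 4, by omega⟩
      refine ⟨_, m1 x hx0 hx8, ?_⟩
      have s1 : sin (((2 * m + 1 : ℕ) : ℝ) * (π / 2 + 2 * x) / 2 + π / 4)
          = - sin (((2 * m + 1 : ℕ) : ℝ) * x) := by
        rw [← p0 _ k]; congr 1; rw [hk]; push_cast; ring
      have s2 : sin (((2 * m + 1 : ℕ) : ℝ) * (π / 2 + 2 * x) / 2 - π / 4)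
          = cos (((2 * m + 1 : ℕ) : ℝ) * x) := by
        rw [← p1 _ k]; congr 1; rw [hk]; push_cast; ring
      rw [MABK, hpow, c1, c2, s1, s2, hodd.neg_pow, ← hx]
      ring
    · obtain ⟨k, hk⟩ : ∃ k, m = 4 * k + 3 := ⟨m / 4, by omega⟩
      refine ⟨_, m2 x hx0 hx8, ?_⟩
      have s1 : sin (((2 * m + 1 : ℕ) : ℝ) * (3 * π / 2 + 2 * x) / 2 + π / 4)
          = - cos (((2 * m + 1 : ℕ) : ℝ) * x) := by
        rw [← p3 _ (3 * k + 2)]; congr 1; rw [hk]; push_cast; ring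
      have s2 : sin (((2 * m + 1 : ℕ) : ℝ) * (3 * π / 2 + 2 * x) / 2 - π / 4)
          = - sin (((2 * m + 1 : ℕ) : ℝ) * x) := by
        rw [← p0 _ (3 * k + 2)]; congr 1; rw [hk]; push_cast; ring
      rw [MABK, hpow, c3, c4, s1, s2, hodd.neg_pow, hodd.neg_pow, ← hx]
      ring
  · intro h4
    obtain ⟨x, hx0, hx8, hx⟩ := exists_aux m (by omega) (-1) (Or.inr ⟨rfl, by omega⟩) s hs1 hs2
    have q : ∀ z : ℝ, sin (-z + π / 4) = - sin (z - π / 4) := fun z => by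
      rw [← Real.sin_neg]; congr 1; ring
    rcases (by omega : (2 * m + 1) % 8 = 5 ∨ (2 * m + 1) % 8 = 1) with h8 | h8
    · obtain ⟨k, hk⟩ : ∃ k, m = 4 * k + 2 := ⟨m / 4, by omega⟩
      refine ⟨_, m1 x hx0 hx8, ?_⟩
      have s1 : sin (((2 * m + 1 : ℕ) : ℝ) * (π / 2 + 2 * x) / 2 + π / 4)
          = - cos (((2 * m + 1 : ℕ) : ℝ) * x) := by
        rw [← p3 _ k]; congr 1; rw [hk]; push_cast; ring
      have s2 : sin (((2 * m + 1 : ℕ) : ℝ) * (π / 2 + 2 * x) / 2 - π / 4)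
          = - sin (((2 * m + 1 : ℕ) : ℝ) * x) := by
        rw [← p0 _ k]; congr 1; rw [hk]; push_cast; ring
      rw [MABKtilde, hpow, q, c1, c2, s1, s2, hodd.neg_pow, ← hx]
      ring
    · obtain ⟨k, hk⟩ : ∃ k, m = 4 * k := ⟨m / 4, by omega⟩
      refine ⟨_, m2 x hx0 hx8, ?_⟩
      have s1 : sin (((2 * m + 1 : ℕ) : ℝ) * (3 * π / 2 + 2 * x) / 2 + π / 4)
          = - sin (((2 * m + 1 : ℕ) : ℝ) * x) := by
        rw [← p0 _ (3 * k)]; congr 1; rw [hk]; push_cast; ring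
      have s2 : sin (((2 * m + 1 : ℕ) : ℝ) * (3 * π / 2 + 2 * x) / 2 - π / 4)
          = cos (((2 * m + 1 : ℕ) : ℝ) * x) := by
        rw [← p1 _ (3 * k)]; congr 1; rw [hk]; push_cast; ring
      rw [MABKtilde, hpow, q, c3, c4, s1, s2, hodd.neg_pow, hodd.neg_pow, ← hx]
      ring
end
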